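/- Let M be a bounded self-adjoint operator whose spectrum consists of exactly two points a < b, and let (P_n) be orthogonal projections with n-dimensional ranges L_n such that P_n x → x for all x ∈ H. Then Σ = Λ, and both sets are contained in the circle {z ∈ ℂ : |z − (a+b)/2| = (b−a)/2}. -/

import Mathlib

open Filter Topology

noncomputable section

variable {H : Type*} [NormedAddCommGroup H] [InnerProductSpace ℂ H] [CompleteSpace H]

/-- The compression `P T |_(ran P)` of a linear operator `T` to the range of `P`. -/
def compress (P : H →L[ℂ] H) (T : H →ₗ[ℂ] H) :
    LinearMap.range (P : H →ₗ[ℂ] H) →ₗ[ℂ] LinearMap.range (P : H →ₗ[ℂ] H) :=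
  LinearMap.codRestrict (LinearMap.range (P : H →ₗ[ℂ] H))
    (((P : H →ₗ[ℂ] H).comp T).comp (LinearMap.range (P : H →ₗ[ℂ] H)).subtype)
    fun c => ⟨T c, rfl⟩

/-- `(M - z)²` as a linear map. -/
def sqz (M : H →ₗ[ℂ] H) (z : ℂ) : H →ₗ[ℂ] H :=
  (M - z • LinearMap.id) ∘ₗ (M - z • LinearMap.id)

/-- The second order spectrum of `M` relative to the range of `P`. -/
def spec2 (M : H →ₗ[ℂ] H) (P : H →L[ℂ] H) : Set ℂ :=
  {z | ¬ Function.Bijective (compress P (sqz M z))}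

/-- `σ_n(z) = inf {‖P (M - z)² v‖ / ‖v‖ : 0 ≠ v ∈ ran P}`. -/
def sigma2 (M : H →ₗ[ℂ] H) (P : H →L[ℂ] H) (z : ℂ) : ℝ :=
  sInf {r : ℝ | ∃ v, v ∈ LinearMap.range (P : H →ₗ[ℂ] H) ∧ v ≠ 0 ∧ r = ‖P (sqz M z v)‖ / ‖v‖}

/-!
Write `T` for the compression of `M` to `L = ran P`, a symmetric operator. Since
`(M - a) (M - b) = 0`, the compression of `(M - z)²` is `(a + b - 2 z) T + z² - a b`. It is
therefore diagonal in an orthonormal eigenbasis of `T`, acting on the `l`-eigenspace as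
`(z - l)² + (l - a) (b - l)`, and `σ(z)` is the least modulus of these numbers. Since
`(l - a) (b - l) ≥ 0`, this quadratic factors as `(z - w) (z - conj w)` with `Re w = l`, and its
roots, which make up the second order spectrum, lie on the circle. Hence
`|z - w₀|² ≤ σ(z) ≤ |z - w| |z - conj w|` for some `w₀` and all `w` in the second order spectrum,
and `σ_n(z) → 0` exactly when `z` is a limit of points of the second order spectra.
-/

open Module.End ComplexConjugate

section Symbol

/-- The scalar `(z - l)² + (l - a) (b - l)` by which the compression of `(M - z)²` acts on the
`l`-eigenspace of the compression of `M`, when `(M - a) (M - b) = 0`. -/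
def secondOrderSymbol (a b : ℝ) (z : ℂ) (l : ℝ) : ℂ :=
  (z - l) ^ 2 + (l - a) * (b - l)

variable {a b l : ℝ} {w : ℂ}

theorem exists_secondOrderSymbol_eq_zero (a b l : ℝ) : ∃ w, secondOrderSymbol a b w l = 0 := by
  obtain ⟨x, hx⟩ := IsAlgClosed.exists_pow_nat_eq (-((l - a) * (b - l)) : ℂ) two_pos
  exact ⟨l + x, by simp [secondOrderSymbol, hx]⟩

theorem re_eq_of_secondOrderSymbol_eq_zero (hl : 0 ≤ (l - a) * (b - l))
    (hw : secondOrderSymbol a b w l = 0) : w.re = l := by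
  have h_re : (w.re - l) ^ 2 - w.im ^ 2 + (l - a) * (b - l) = 0 := by
    simpa [secondOrderSymbol, pow_two] using congrArg Complex.re hw
  have h_im : (w.re - l) * w.im = 0 := by
    have h : (w.re - l) * w.im + w.im * (w.re - l) = 0 := by
      simpa [secondOrderSymbol, pow_two] using congrArg Complex.im hw
    linarith
  rcases mul_eq_zero.mp h_im with h | h
  · exact sub_eq_zero.mp h
  · rw [h] at h_re
    nlinarith

theorem secondOrderSymbol_eq_mul_of_eq_zero (hl : 0 ≤ (l - a) * (b - l))
    (hw : secondOrderSymbol a b w l = 0) (z : ℂ) :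
    secondOrderSymbol a b z l = (z - w) * (z - conj w) := by
  have hw_conj : w + conj w = 2 * l := by
    rw [Complex.add_conj, re_eq_of_secondOrderSymbol_eq_zero hl hw]
    push_cast
    rfl
  unfold secondOrderSymbol at hw ⊢
  linear_combination hw + (z - w) * hw_conj

theorem norm_sub_eq_of_secondOrderSymbol_eq_zero (hab : a ≤ b) (hl : 0 ≤ (l - a) * (b - l))
    (hw : secondOrderSymbol a b w l = 0) : ‖w - ((a : ℂ) + b) / 2‖ = (b - a) / 2 := by
  set c : ℂ := ((a : ℂ) + b) / 2 with hc
  have h_conj : ‖c - conj w‖ = ‖c - w‖ := by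
    rw [← Complex.norm_conj]
    simp [hc, map_ofNat]
  have h_symbol : secondOrderSymbol a b c l = (((b - a) / 2 : ℝ) : ℂ) ^ 2 := by
    push_cast [secondOrderSymbol, hc]
    ring
  have h_sq : ‖w - c‖ ^ 2 = ((b - a) / 2) ^ 2 :=
    calc ‖w - c‖ ^ 2 = ‖secondOrderSymbol a b c l‖ := by
          rw [secondOrderSymbol_eq_mul_of_eq_zero hl hw, norm_mul, h_conj, norm_sub_rev, sq]
      _ = ((b - a) / 2) ^ 2 := by
          rw [h_symbol, norm_pow, Complex.norm_real, Real.norm_eq_abs, sq_abs]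
  exact (sq_eq_sq₀ (norm_nonneg _) (by linarith)).mp h_sq

theorem exists_secondOrderSymbol_eq_zero_dist_sq_le (hl : 0 ≤ (l - a) * (b - l)) (z : ℂ) :
    ∃ w, secondOrderSymbol a b w l = 0 ∧ dist w z ^ 2 ≤ ‖secondOrderSymbol a b z l‖ := by
  obtain ⟨w, hw⟩ := exists_secondOrderSymbol_eq_zero a b l
  have hw_conj : secondOrderSymbol a b (conj w) l = 0 := by
    simp [secondOrderSymbol_eq_mul_of_eq_zero hl hw]
  rw [secondOrderSymbol_eq_mul_of_eq_zero hl hw, norm_mul, ← dist_eq_norm, ← dist_eq_norm,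
    dist_comm z, dist_comm z]
  rcases le_total (dist w z) (dist (conj w) z) with h | h
  · exact ⟨w, hw, by rw [sq]; gcongr⟩
  · exact ⟨conj w, hw_conj, by rw [sq]; gcongr⟩

end Symbol

theorem exists_norm_mul_norm_le_of_apply_eq_smul {ι 𝕜 E : Type*} [Fintype ι] [Nonempty ι]
    [RCLike 𝕜] [NormedAddCommGroup E] [InnerProductSpace 𝕜 E] (e : OrthonormalBasis ι 𝕜 E)
    {A : E →ₗ[𝕜] E} {μ : ι → 𝕜} (hA : ∀ i, A (e i) = μ i • e i) :
    ∃ i, ∀ v, ‖μ i‖ * ‖v‖ ≤ ‖A v‖ := by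
  obtain ⟨i, hi⟩ := Finite.exists_min fun i => ‖μ i‖
  refine ⟨i, fun v => ?_⟩
  have h_coord (j : ι) : inner 𝕜 (e j) (A v) = μ j * inner 𝕜 (e j) v := by
    classical
    nth_rw 1 [← e.sum_repr' v]
    simp [map_sum, hA, inner_sum, inner_smul_right, e.inner_eq_ite, mul_comm]
  rw [← sq_le_sq₀ (by positivity) (by positivity), mul_pow, ← e.sum_sq_norm_inner_right v,
    ← e.sum_sq_norm_inner_right (A v), Finset.mul_sum]
  gcongr with j
  rw [h_coord, norm_mul, mul_pow]
  gcongr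
  exact hi j

theorem aeval_eq_zero_of_forall_mem_spectrum {A : Type*} [CStarAlgebra A] {x : A}
    [IsStarNormal x] {p : Polynomial ℂ} (hp : ∀ z ∈ spectrum ℂ x, p.eval z = 0) :
    Polynomial.aeval x p = 0 := by
  rw [← cfc_polynomial p x, cfc_congr hp, cfc_const_zero]

theorem sub_comp_sub_eq_zero_of_spectrum_subset {M : H →L[ℂ] H} (hM : IsStarNormal M) {a b : ℂ}
    (hspec : spectrum ℂ M ⊆ {a, b}) :
    ((M : H →ₗ[ℂ] H) - a • LinearMap.id) ∘ₗ ((M : H →ₗ[ℂ] H) - b • LinearMap.id) = 0 := by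
  have h := aeval_eq_zero_of_forall_mem_spectrum (x := M)
    (p := (Polynomial.X - Polynomial.C a) * (Polynomial.X - Polynomial.C b)) fun z hz => by
      rcases hspec hz with rfl | rfl <;> simp
  ext v
  simpa [Algebra.algebraMap_eq_smul_one] using congrArg (fun T : H →L[ℂ] H => T v) h

variable {E : Type*} [NormedAddCommGroup E] [InnerProductSpace ℂ E] {M : E →ₗ[ℂ] E}

section Compression

variable {P : E →L[ℂ] E} {z : ℂ}

theorem inner_compress_right (hP : (P : E →ₗ[ℂ] E).IsSymmetricProjection) (T : E →ₗ[ℂ] E)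
    (u v : LinearMap.range (P : E →ₗ[ℂ] E)) :
    inner ℂ u (compress P T v) = inner ℂ (u : E) (T v) :=
  calc inner ℂ u (compress P T v) = inner ℂ (P u) (T v) := (hP.isSymmetric u (T v)).symm
    _ = inner ℂ (u : E) (T v) := by
      rw [show P u = u from LinearMap.IsIdempotentElem.mem_range_iff hP.isIdempotentElem |>.mp u.2]

theorem isSymmetric_compress (hM : M.IsSymmetric)
    (hP : (P : E →ₗ[ℂ] E).IsSymmetricProjection) : (compress P M).IsSymmetric := fun u v => by
  rw [← inner_conj_symm, inner_compress_right hP, inner_compress_right hP, inner_conj_symm, hM]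

theorem inner_compress_sqz_ofReal (hM : M.IsSymmetric)
    (hP : (P : E →ₗ[ℂ] E).IsSymmetricProjection) (l : ℝ) (v : LinearMap.range (P : E →ₗ[ℂ] E)) :
    inner ℂ v (compress P (sqz M l) v) = (‖M v - (l : ℂ) • (v : E)‖ : ℂ) ^ 2 := by
  have hMl : (M - (l : ℂ) • LinearMap.id).IsSymmetric :=
    hM.sub (LinearMap.IsSymmetric.id.smul (Complex.conj_ofReal l))
  rw [inner_compress_right hP]
  exact (hMl _ _).symm.trans (inner_self_eq_norm_sq_to_K _)

theorem mem_spec2_iff_exists_compress_eq_zero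
    [FiniteDimensional ℂ (LinearMap.range (P : E →ₗ[ℂ] E))] :
    z ∈ spec2 M P ↔ ∃ v, compress P (sqz M z) v = 0 ∧ v ≠ 0 := by
  have h_bij : Function.Bijective (compress P (sqz M z)) ↔
      Function.Injective (compress P (sqz M z)) :=
    ⟨And.left, fun h => ⟨h, LinearMap.injective_iff_surjective.mp h⟩⟩
  rw [spec2, Set.mem_ofPred_eq, h_bij, injective_iff_map_eq_zero]
  push Not
  rfl

theorem sigma2_nonneg : 0 ≤ sigma2 M P z := by
  apply Real.sInf_nonneg
  rintro _ ⟨v, -, -, rfl⟩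
  positivity

theorem sigma2_le_norm_div_norm (v : LinearMap.range (P : E →ₗ[ℂ] E)) (hv : v ≠ 0) :
    sigma2 M P z ≤ ‖compress P (sqz M z) v‖ / ‖v‖ := by
  refine csInf_le ⟨0, ?_⟩ ⟨v, v.2, by simpa using hv, rfl⟩
  rintro _ ⟨u, -, -, rfl⟩
  positivity

theorem le_sigma2 [Nontrivial (LinearMap.range (P : E →ₗ[ℂ] E))] {c : ℝ}
    (hc : ∀ v, c * ‖v‖ ≤ ‖compress P (sqz M z) v‖) : c ≤ sigma2 M P z := by
  obtain ⟨v, hv⟩ := exists_ne (0 : LinearMap.range (P : E →ₗ[ℂ] E))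
  refine le_csInf ⟨_, v, v.2, by simpa using hv, rfl⟩ ?_
  rintro _ ⟨u, hu, hu0, rfl⟩
  rw [le_div_iff₀ (norm_pos_iff.mpr hu0)]
  exact hc ⟨u, hu⟩

end Compression

section Quadratic

variable {P : E →L[ℂ] E} {a b l : ℝ}

theorem compress_sqz_apply_of_apply_eq_smul (hP : IsIdempotentElem (P : E →ₗ[ℂ] E))
    (hMab : (M - (a : ℂ) • LinearMap.id) ∘ₗ (M - (b : ℂ) • LinearMap.id) = 0) (z : ℂ)
    {v : LinearMap.range (P : E →ₗ[ℂ] E)} (hv : compress P M v = (l : ℂ) • v) :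
    compress P (sqz M z) v = secondOrderSymbol a b z l • v := by
  have h_quad : M (M v) = ((a : ℂ) + b) • M v - ((a : ℂ) * b) • (v : E) := by
    have h : M (M v - (b : ℂ) • (v : E)) - (a : ℂ) • (M v - (b : ℂ) • (v : E)) = 0 :=
      LinearMap.congr_fun hMab (v : E)
    rw [map_sub, map_smul] at h
    linear_combination (norm := module) h
  have h_sqz : sqz M z v = ((a : ℂ) + b - 2 * z) • M v + (z ^ 2 - (a : ℂ) * b) • (v : E) := by
    change M (M v - z • (v : E)) - z • (M v - z • (v : E)) = _
    rw [map_sub, map_smul, h_quad]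
    module
  have hPv : P v = v := (LinearMap.IsIdempotentElem.mem_range_iff hP).mp v.2
  have hPMv : P (M v) = (l : ℂ) • (v : E) := congrArg Subtype.val hv
  apply Subtype.ext
  calc P (sqz M z v)
      = ((a : ℂ) + b - 2 * z) • (l : ℂ) • (v : E) + (z ^ 2 - (a : ℂ) * b) • (v : E) := by
        rw [h_sqz, map_add, map_smul, map_smul, hPv, hPMv]
    _ = secondOrderSymbol a b z l • (v : E) := by
        unfold secondOrderSymbol
        module

variable (hM : M.IsSymmetric) (hP : (P : E →ₗ[ℂ] E).IsSymmetricProjection)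
  (hMab : (M - (a : ℂ) • LinearMap.id) ∘ₗ (M - (b : ℂ) • LinearMap.id) = 0)

include hM hP hMab

theorem mul_nonneg_of_hasEigenvalue_compress (hl : HasEigenvalue (compress P M) (l : ℂ)) :
    0 ≤ (l - a) * (b - l) := by
  obtain ⟨v, hv⟩ := hl.exists_hasEigenvector
  have h_norm : (l - a) * (b - l) * ‖v‖ ^ 2 = ‖M v - (l : ℂ) • (v : E)‖ ^ 2 := by
    have h := inner_compress_sqz_ofReal hM hP l v
    rw [compress_sqz_apply_of_apply_eq_smul hP.isIdempotentElem hMab l hv.apply_eq_smul,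
      inner_smul_right, inner_self_eq_norm_sq_to_K] at h
    apply Complex.ofReal_injective
    simpa [secondOrderSymbol] using h
  have hv_pos : 0 < ‖v‖ ^ 2 := pow_pos (norm_pos_iff.mpr hv.2) 2
  exact nonneg_of_mul_nonneg_left (h_norm ▸ sq_nonneg _) hv_pos

variable [FiniteDimensional ℂ (LinearMap.range (P : E →ₗ[ℂ] E))]

theorem exists_hasEigenvalue_norm_secondOrderSymbol_mul_le
    [Nontrivial (LinearMap.range (P : E →ₗ[ℂ] E))] (z : ℂ) :
    ∃ l : ℝ, HasEigenvalue (compress P M) (l : ℂ) ∧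
      ∀ v, ‖secondOrderSymbol a b z l‖ * ‖v‖ ≤ ‖compress P (sqz M z) v‖ := by
  have hT := isSymmetric_compress hM hP
  have : Nonempty (Fin (Module.finrank ℂ (LinearMap.range (P : E →ₗ[ℂ] E)))) :=
    Fin.pos_iff_nonempty.mp Module.finrank_pos
  obtain ⟨i, hi⟩ := exists_norm_mul_norm_le_of_apply_eq_smul (hT.eigenvectorBasis rfl) fun j =>
    compress_sqz_apply_of_apply_eq_smul hP.isIdempotentElem hMab z
      (hT.apply_eigenvectorBasis rfl j)
  exact ⟨hT.eigenvalues rfl i, hT.hasEigenvalue_eigenvalues rfl i, hi⟩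

theorem mem_spec2_iff_exists_hasEigenvalue {z : ℂ} :
    z ∈ spec2 M P ↔
      ∃ l : ℝ, HasEigenvalue (compress P M) (l : ℂ) ∧ secondOrderSymbol a b z l = 0 := by
  rw [mem_spec2_iff_exists_compress_eq_zero]
  constructor
  · rintro ⟨v, hv, hv0⟩
    have := nontrivial_of_ne v 0 hv0
    obtain ⟨l, hl, h_le⟩ := exists_hasEigenvalue_norm_secondOrderSymbol_mul_le hM hP hMab z
    exact ⟨l, hl, by simpa [hv, hv0, mul_nonpos_iff] using h_le v⟩
  · rintro ⟨l, hl, hzl⟩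
    obtain ⟨v, hv⟩ := hl.exists_hasEigenvector
    refine ⟨v, ?_, hv.2⟩
    rw [compress_sqz_apply_of_apply_eq_smul hP.isIdempotentElem hMab z hv.apply_eq_smul, hzl,
      zero_smul]

theorem norm_sub_eq_of_mem_spec2 (hab : a ≤ b) {w : ℂ} (hw : w ∈ spec2 M P) :
    ‖w - ((a : ℂ) + b) / 2‖ = (b - a) / 2 := by
  obtain ⟨l, hl, hwl⟩ := (mem_spec2_iff_exists_hasEigenvalue hM hP hMab).mp hw
  exact norm_sub_eq_of_secondOrderSymbol_eq_zero hab
    (mul_nonneg_of_hasEigenvalue_compress hM hP hMab hl) hwl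

theorem exists_mem_spec2_dist_le_sqrt_sigma2
    [Nontrivial (LinearMap.range (P : E →ₗ[ℂ] E))] (z : ℂ) :
    ∃ w ∈ spec2 M P, dist w z ≤ √(sigma2 M P z) := by
  obtain ⟨l, hl, h_le⟩ := exists_hasEigenvalue_norm_secondOrderSymbol_mul_le hM hP hMab z
  obtain ⟨w, hwl, h_dist⟩ := exists_secondOrderSymbol_eq_zero_dist_sq_le
    (mul_nonneg_of_hasEigenvalue_compress hM hP hMab hl) z
  exact ⟨w, (mem_spec2_iff_exists_hasEigenvalue hM hP hMab).mpr ⟨l, hl, hwl⟩,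
    Real.le_sqrt_of_sq_le (h_dist.trans (le_sigma2 h_le))⟩

theorem sigma2_le_of_mem_spec2 {w : ℂ} (hw : w ∈ spec2 M P) (z : ℂ) :
    sigma2 M P z ≤ ‖z - w‖ * ‖z - conj w‖ := by
  obtain ⟨l, hl, hwl⟩ := (mem_spec2_iff_exists_hasEigenvalue hM hP hMab).mp hw
  obtain ⟨v, hv⟩ := hl.exists_hasEigenvector
  calc sigma2 M P z ≤ ‖compress P (sqz M z) v‖ / ‖v‖ := sigma2_le_norm_div_norm v hv.2
    _ = ‖secondOrderSymbol a b z l‖ := by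
        rw [compress_sqz_apply_of_apply_eq_smul hP.isIdempotentElem hMab z hv.apply_eq_smul,
          norm_smul, mul_div_cancel_right₀ _ (norm_ne_zero_iff.mpr hv.2)]
    _ = ‖z - w‖ * ‖z - conj w‖ := by
        rw [secondOrderSymbol_eq_mul_of_eq_zero
          (mul_nonneg_of_hasEigenvalue_compress hM hP hMab hl) hwl, norm_mul]

end Quadratic

section Limit

variable {P : ℕ → E →L[ℂ] E} {a b : ℝ} (hM : M.IsSymmetric)
  (hMab : (M - (a : ℂ) • LinearMap.id) ∘ₗ (M - (b : ℂ) • LinearMap.id) = 0)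
  (hP : ∀ n, (P n : E →ₗ[ℂ] E).IsSymmetricProjection)
  (hPfin : ∀ n, FiniteDimensional ℂ (LinearMap.range (P n : E →ₗ[ℂ] E)))

include hM hMab hP hPfin

theorem exists_tendsto_mem_spec2_of_tendsto_sigma2
    (hPne : ∀ n, 1 ≤ n → Nontrivial (LinearMap.range (P n : E →ₗ[ℂ] E))) {z : ℂ}
    (hz : Tendsto (fun n => sigma2 M (P n) z) atTop (𝓝 0)) :
    ∃ zs : ℕ → ℂ, (∀ n, 1 ≤ n → zs n ∈ spec2 M (P n)) ∧ Tendsto zs atTop (𝓝 z) := by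
  have h_near (n : ℕ) :
      ∃ w, 1 ≤ n → w ∈ spec2 M (P n) ∧ dist w z ≤ √(sigma2 M (P n) z) := by
    by_cases hn : 1 ≤ n
    · have := hPne n hn
      obtain ⟨w, hw⟩ := exists_mem_spec2_dist_le_sqrt_sigma2 hM (hP n) hMab z
      exact ⟨w, fun _ => hw⟩
    · exact ⟨0, fun h => absurd h hn⟩
  choose zs hzs using h_near
  refine ⟨zs, fun n hn => (hzs n hn).1, tendsto_iff_dist_tendsto_zero.mpr ?_⟩
  exact squeeze_zero' (.of_forall fun _ => dist_nonneg)
    (eventually_atTop.mpr ⟨1, fun n hn => (hzs n hn).2⟩) (by simpa using hz.sqrt)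

theorem tendsto_sigma2_of_tendsto_mem_spec2 {z : ℂ} {zs : ℕ → ℂ}
    (hzs : ∀ n, 1 ≤ n → zs n ∈ spec2 M (P n)) (hz : Tendsto zs atTop (𝓝 z)) :
    Tendsto (fun n => sigma2 M (P n) z) atTop (𝓝 0) := by
  refine squeeze_zero' (.of_forall fun _ => sigma2_nonneg)
    (eventually_atTop.mpr ⟨1, fun n hn => sigma2_le_of_mem_spec2 hM (hP n) hMab (hzs n hn) z⟩) ?_
  have h_cont : Continuous fun w : ℂ => ‖z - w‖ * ‖z - conj w‖ := by fun_prop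
  simpa [Function.comp_def] using (h_cont.tendsto z).comp hz

theorem norm_sub_eq_of_tendsto_mem_spec2 (hab : a ≤ b) {z : ℂ} {zs : ℕ → ℂ}
    (hzs : ∀ n, 1 ≤ n → zs n ∈ spec2 M (P n)) (hz : Tendsto zs atTop (𝓝 z)) :
    ‖z - ((a : ℂ) + b) / 2‖ = (b - a) / 2 :=
  tendsto_nhds_unique (hz.sub_const _).norm <| tendsto_const_nhds.congr' <|
    eventually_atTop.mpr ⟨1, fun n hn =>
      (norm_sub_eq_of_mem_spec2 hM (hP n) hMab hab (hzs n hn)).symm⟩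

theorem Sigma_eq_Lambda_subset_circle_of_two_point_spectrum_general (hab : a ≤ b)
    (hPne : ∀ n, 1 ≤ n → Nontrivial (LinearMap.range (P n : E →ₗ[ℂ] E))) :
    {z : ℂ | Tendsto (fun n => sigma2 M (P n) z) atTop (𝓝 0)} =
      {z : ℂ | ∃ zs : ℕ → ℂ, (∀ n, 1 ≤ n → zs n ∈ spec2 M (P n)) ∧
        Tendsto zs atTop (𝓝 z)} ∧
    {z : ℂ | Tendsto (fun n => sigma2 M (P n) z) atTop (𝓝 0)} ⊆
      {z : ℂ | ‖z - (((a : ℂ) + b) / 2)‖ = (b - a) / 2} := by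
  refine ⟨Set.Subset.antisymm ?_ ?_, ?_⟩
  · exact fun z hz => exists_tendsto_mem_spec2_of_tendsto_sigma2 hM hMab hP hPfin hPne hz
  · rintro z ⟨zs, hzs, hz⟩
    exact tendsto_sigma2_of_tendsto_mem_spec2 hM hMab hP hPfin hzs hz
  · intro z hσ
    obtain ⟨zs, hzs, hz⟩ := exists_tendsto_mem_spec2_of_tendsto_sigma2 hM hMab hP hPfin hPne hσ
    exact norm_sub_eq_of_tendsto_mem_spec2 hM hMab hP hPfin hab hzs hz

end Limit

/-- If the spectrum of the bounded self-adjoint operator `M` consists of exactly two points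
`a < b`, then `Σ = Λ` and both sets are contained in the circle centred at `(a+b)/2` of
radius `(b-a)/2`. -/
theorem Sigma_eq_Lambda_subset_circle_of_two_point_spectrum
    (M : H →L[ℂ] H) (hM : IsSelfAdjoint M)
    (a b : ℝ) (hab : a < b)
    (hspec : spectrum ℂ M = {(a : ℂ), (b : ℂ)})
    (P : ℕ → H →L[ℂ] H)
    (hPsa : ∀ n, IsSelfAdjoint (P n))
    (hPidem : ∀ n, IsIdempotentElem (P n))
    (hPfin : ∀ n, FiniteDimensional ℂ (LinearMap.range (P n : H →ₗ[ℂ] H)))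
    (hPdim : ∀ n, Module.finrank ℂ (LinearMap.range (P n : H →ₗ[ℂ] H)) = n)
    (hPlim : ∀ x : H, Tendsto (fun n => P n x) atTop (𝓝 x)) :
    {z : ℂ | Tendsto (fun n => sigma2 (M : H →ₗ[ℂ] H) (P n) z) atTop (𝓝 0)} =
      {z : ℂ | ∃ zs : ℕ → ℂ, (∀ n, 1 ≤ n → zs n ∈ spec2 (M : H →ₗ[ℂ] H) (P n)) ∧
        Tendsto zs atTop (𝓝 z)} ∧
    {z : ℂ | Tendsto (fun n => sigma2 (M : H →ₗ[ℂ] H) (P n) z) atTop (𝓝 0)} ⊆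
      {z : ℂ | ‖z - (((a : ℂ) + b) / 2)‖ = (b - a) / 2} :=
  Sigma_eq_Lambda_subset_circle_of_two_point_spectrum_general
    (ContinuousLinearMap.isSelfAdjoint_iff_isSymmetric.mp hM)
    (sub_comp_sub_eq_zero_of_spectrum_subset hM.isStarNormal hspec.subset)
    (fun n => ContinuousLinearMap.isStarProjection_iff_isSymmetricProjection.mp
      ⟨hPidem n, hPsa n⟩)
    hPfin hab.le fun n hn => Module.nontrivial_of_finrank_pos (R := ℂ) ((hPdim n).symm ▸ hn)

end
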